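/- Consider a Fragile CPR game with strictly decreasing rate of return r and player-specific prospect-theoretic preferences. Then for every utilization level x* ∈ [0, x^0_NE] there exists a tax rate t ∈ [0, t̄] such that x^t_NE = x*; in particular, there exists a tax rate t* with x^{t*}_NE = x^0_OPT. Moreover, for any x* > x^0_NE there does not exist a positive tax rate t for which x^t_NE = x*. -/

import Mathlib

/-!
Write `A = r x - t`. Where `x < 1` and `A > 0`, the effective rate `f` and its `x`-derivative are
`A^α (1 - p) * numF` and `-A^α (1 - p) * denF`, where
`numF = 1 - k ((1 + t) / A)^α * p / (1 - p)` and
`denF = α * (-r') / A + (1 + k ((1 + t) / A)^α) * p' / (1 - p)`.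
As `r` is decreasing and concave and `p` increasing and convex, `numF` is antitone and `denF` is
monotone, jointly in `x` and `t`. Hence the investment `share = α * max numF 0 / denF` dictated by
the first-order condition is antitone in the total investment `x` and in the tax `t`
(`share_anti`), and the first-order condition is sufficient for a best response
(`utility_le_of_foc`). Profiles of shares at total `X` that add up to `X` are therefore equilibria
(`isPNE_share`).

A level `0 < xstar ≤ x^0_NE` is reached by the intermediate value theorem in `t`: the sum of the
shares at `xstar` is at least `xstar` for `t = 0`, by antitonicity in `x`, and is zero for `t` close
to `r xstar` (`exists_tax`). The level `0` is reached at `t̄`, where no effective rate is positive.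

For the upper bounds, it is enough that no player gains by lowering her investment: this gives
`x_i ≤ share` at the total (`le_share_of_left_optimal`), and antitonicity of the shares bounds the
total by `x^0_NE` (`total_le_of_le_share`). This covers equilibria at any tax as well as the social
optimum, since lowering one investment never hurts the other players (`opt_total_le`).
-/

open Real Set

noncomputable section

/-- Effective rate of return of a player with sensitivity `α` and loss aversion `k`,
at utilization `x` and tax rate `t`. -/
def effRate (p r : ℝ → ℝ) (α k x t : ℝ) : ℝ :=
  if 0 ≤ r x - t then
    (r x - t) ^ α * (1 - p x) - k * (1 + t) ^ α * p x
  else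
    -(k * ((t - r x) ^ α * (1 - p x) + (1 + t) ^ α * p x))

/-- Partial derivative of the effective rate of return in the utilization. -/
def effRateDx (p r : ℝ → ℝ) (α k x t : ℝ) : ℝ :=
  deriv (fun z => effRate p r α k z t) x

/-- `g_i(x,t) = α_i f_i(x,t) / (−f_{i,x}(x,t))`. -/
def gFun (p r : ℝ → ℝ) (α k x t : ℝ) : ℝ :=
  α * effRate p r α k x t / (-effRateDx p r α k x t)

/-- Standing assumptions on the failure probability `p`. -/
structure FailureProb (p : ℝ → ℝ) : Prop where
  convexOn : ConvexOn ℝ (Ico (0:ℝ) 1) p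
  strictMonoOn : StrictMonoOn p (Ico (0:ℝ) 1)
  contDiffOn : ContDiffOn ℝ 1 p (Ico (0:ℝ) 1)
  eq_one : ∀ x : ℝ, 1 ≤ x → p x = 1
  mem_unit : ∀ x : ℝ, p x ∈ Icc (0:ℝ) 1

/-- Standing assumptions on the rate of return `r`. -/
structure RateOfReturn (r : ℝ → ℝ) : Prop where
  concaveOn : ConcaveOn ℝ (Icc (0:ℝ) 1) r
  pos : ∀ x ∈ Icc (0:ℝ) 1, 0 < r x
  strictMonoOrAnti : StrictMonoOn r (Icc (0:ℝ) 1) ∨ StrictAntiOn r (Icc (0:ℝ) 1)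
  contDiffOn : ContDiffOn ℝ 1 r (Icc (0:ℝ) 1)

/-- `S_t`: the set of utilizations `x ∈ [0,1]` with `r(x) − t ≥ 0`. -/
def St (r : ℝ → ℝ) (t : ℝ) : Set ℝ := {x | x ∈ Icc (0:ℝ) 1 ∧ 0 ≤ r x - t}

/-- The maximal tax rate `t̄` of the game. -/
def tbar {ι : Type*} [Fintype ι] (p r : ℝ → ℝ) (α k : ι → ℝ) : ℝ :=
  sSup {t : ℝ | 0 ≤ t ∧ ∃ i : ι, ∃ x ∈ Icc (0:ℝ) 1, 0 < effRate p r (α i) (k i) x t}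

/-- The maximal tax rate `t̄_i` of a single player. -/
def tbarI (p r : ℝ → ℝ) (α k : ℝ) : ℝ :=
  sSup {t : ℝ | 0 ≤ t ∧ ∃ x ∈ St r t, 0 < effRate p r α k x t}

/-- `a_t` for a strictly increasing rate of return. -/
def aT (r : ℝ → ℝ) (t : ℝ) : ℝ :=
  if t ≤ r 0 then 0 else sInf {x | x ∈ Icc (0:ℝ) 1 ∧ r x = t}

/-- The threshold `y^t_i` for a strictly decreasing rate of return. -/
def yT (p r : ℝ → ℝ) (α k t : ℝ) : ℝ :=
  if effRate p r α k 0 t ≤ 0 then 0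
  else sInf {x | x ∈ St r t ∧ effRate p r α k x t = 0}

/-- `ĝ_i(x,t)`, for a strictly decreasing rate of return. -/
def gHat (p r : ℝ → ℝ) (α k x t : ℝ) : ℝ :=
  if x < yT p r α k t then gFun p r α k x t else 0

/-- The function `q_i(x,t)` for strictly increasing rate of return. -/
def qFun (p r : ℝ → ℝ) (α x t : ℝ) : ℝ :=
  deriv r x * (1 - p x) ^ 2 /
      ((r x + 1) * deriv p x - α * deriv r x * (1 - p x) * p x) *
    ((1 + t) / (r x - t)) ^ (1 - α)

/-- `b` is a best response of a player (parameters `α`, `k`) to the others' total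
investment `xbar` at tax rate `t`. -/
def IsBestResponse (p r : ℝ → ℝ) (α k t xbar b : ℝ) : Prop :=
  b ∈ Icc (0:ℝ) 1 ∧
    ∀ y ∈ Icc (0:ℝ) 1,
      y ^ α * effRate p r α k (y + xbar) t ≤ b ^ α * effRate p r α k (b + xbar) t

/-- Pure Nash equilibrium of the Fragile CPR game at tax rate `t`. -/
def IsPNE {ι : Type*} [Fintype ι] [DecidableEq ι] (p r : ℝ → ℝ) (α k : ι → ℝ)
    (t : ℝ) (x : ι → ℝ) : Prop :=
  (∀ i, x i ∈ Icc (0:ℝ) 1) ∧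
    ∀ i, ∀ y ∈ Icc (0:ℝ) 1,
      y ^ α i * effRate p r (α i) (k i) (y + ∑ j ∈ Finset.univ.erase i, x j) t ≤
        x i ^ α i * effRate p r (α i) (k i) (x i + ∑ j ∈ Finset.univ.erase i, x j) t

/-- `y` is the threshold `y^t_i` of a player, as defined in the paper for the
increasing and decreasing cases of the rate of return. -/
def IsThresholdY (p r : ℝ → ℝ) (α k t y : ℝ) : Prop :=
  (StrictMonoOn r (Icc (0:ℝ) 1) →
    ((∀ x ∈ St r t, effRate p r α k x t ≤ 0) → y = 0) ∧
    ((∃ x ∈ St r t, 0 < effRate p r α k x t) →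
      ∃ z ∈ St r t, IsMaxOn (fun x => effRate p r α k x t) (St r t) z ∧
        y ∈ Ioo z 1 ∧ effRate p r α k y t = 0)) ∧
  (StrictAntiOn r (Icc (0:ℝ) 1) →
    ((effRate p r α k 0 t ≤ 0) → y = 0) ∧
    ((0 < effRate p r α k 0 t) → y ∈ St r t ∧ effRate p r α k y t = 0))

/-- Pure Nash equilibrium under player-specific tax sensitivities `γ_i`
(all players have `α = 1` and common loss aversion `k`). -/
def IsPNEgamma {ι : Type*} [Fintype ι] [DecidableEq ι] (p r : ℝ → ℝ) (k t : ℝ)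
    (γ : ι → ℝ) (x : ι → ℝ) : Prop :=
  (∀ i, x i ∈ Icc (0:ℝ) 1) ∧
    ∀ i, ∀ y ∈ Icc (0:ℝ) 1,
      y * effRate p r 1 k (y + ∑ j ∈ Finset.univ.erase i, x j) (γ i * t) ≤
        x i * effRate p r 1 k (x i + ∑ j ∈ Finset.univ.erase i, x j) (γ i * t)

/-! ### The primitives on `(0,1)` -/

section Primitives

variable {p r : ℝ → ℝ}

lemma FailureProb.lt_one (hp : FailureProb p) {x : ℝ} (h0 : 0 ≤ x) (h1 : x < 1) : p x < 1 := by
  have h : p x < p ((x + 1) / 2) :=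
    hp.strictMonoOn ⟨h0, h1⟩ ⟨by linarith, by linarith⟩ (by linarith)
  exact h.trans_le (hp.mem_unit _).2

lemma FailureProb.differentiableAt (hp : FailureProb p) {x : ℝ} (hx : x ∈ Ioo (0:ℝ) 1) :
    DifferentiableAt ℝ p x :=
  (hp.contDiffOn.differentiableOn one_ne_zero x ⟨hx.1.le, hx.2⟩).differentiableAt
    (Ico_mem_nhds hx.1 hx.2)

lemma RateOfReturn.differentiableAt (hr : RateOfReturn r) {x : ℝ} (hx : x ∈ Ioo (0:ℝ) 1) :
    DifferentiableAt ℝ r x :=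
  (hr.contDiffOn.differentiableOn one_ne_zero x ⟨hx.1.le, hx.2.le⟩).differentiableAt
    (Icc_mem_nhds hx.1 hx.2)

lemma FailureProb.deriv_pos (hp : FailureProb p) {x : ℝ} (hx : x ∈ Ioo (0:ℝ) 1) :
    0 < deriv p x := by
  have h0 : (0:ℝ) ∈ Ico (0:ℝ) 1 := ⟨le_rfl, one_pos⟩
  have hx' : x ∈ Ico (0:ℝ) 1 := ⟨hx.1.le, hx.2⟩
  refine lt_of_lt_of_le ?_ (hp.convexOn.slope_le_deriv h0 hx' hx.1 (hp.differentiableAt hx))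
  rw [slope_def_field]
  exact div_pos (sub_pos.2 (hp.strictMonoOn h0 hx' hx.1)) (sub_pos.2 hx.1)

lemma RateOfReturn.deriv_nonpos (hdec : StrictAntiOn r (Icc (0:ℝ) 1)) (hr : RateOfReturn r)
    {x : ℝ} (hx : x ∈ Ioo (0:ℝ) 1) : deriv r x ≤ 0 := by
  have h0 : (0:ℝ) ∈ Icc (0:ℝ) 1 := ⟨le_rfl, zero_le_one⟩
  have hx' : x ∈ Icc (0:ℝ) 1 := ⟨hx.1.le, hx.2.le⟩
  refine (hr.concaveOn.deriv_le_slope h0 hx' hx.1 (hr.differentiableAt hx)).trans ?_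
  rw [slope_def_field]
  exact div_nonpos_of_nonpos_of_nonneg (sub_nonpos.2 (hdec h0 hx' hx.1).le) (sub_pos.2 hx.1).le

lemma FailureProb.deriv_mono (hp : FailureProb p) : MonotoneOn (deriv p) (Ioo (0:ℝ) 1) :=
  (hp.convexOn.subset Ioo_subset_Ico_self (convex_Ioo 0 1)).monotoneOn_deriv
    fun _ hx => hp.differentiableAt hx

lemma RateOfReturn.deriv_anti (hr : RateOfReturn r) : AntitoneOn (deriv r) (Ioo (0:ℝ) 1) :=
  (hr.concaveOn.subset Ioo_subset_Icc_self (convex_Ioo 0 1)).antitoneOn_deriv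
    fun _ hx => hr.differentiableAt hx

end Primitives

/-! ### Normalized effective rate and its derivative -/

/-- The effective rate of return divided by the positive factor `(r x - t)^α (1 - p x)`;
meaningful for `x < 1` and `t < r x`. -/
def numF (p r : ℝ → ℝ) (α k x t : ℝ) : ℝ :=
  1 - k * ((1 + t) / (r x - t)) ^ α * (p x / (1 - p x))

/-- Minus the `x`-derivative of the effective rate of return, divided by the positive factor
`(r x - t)^α (1 - p x)`; meaningful for `x ∈ (0,1)` and `t < r x`. -/
def denF (p r : ℝ → ℝ) (α k x t : ℝ) : ℝ :=
  α * (-deriv r x / (r x - t)) + (1 + k * ((1 + t) / (r x - t)) ^ α) * (deriv p x / (1 - p x))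

/-- The investment dictated by the first-order condition at total investment `x` and tax rate
`t`, for `x ∈ (0,1)` and `t < r x`; it is zero when the effective rate is not positive. -/
def share (p r : ℝ → ℝ) (α k x t : ℝ) : ℝ :=
  α * max (numF p r α k x t) 0 / denF p r α k x t

section Rate

variable {p r : ℝ → ℝ} {α k : ℝ}

lemma effRate_of_one_le (hp : FailureProb p) {x t : ℝ} (hx : 1 ≤ x) :
    effRate p r α k x t = -(k * (1 + t) ^ α) := by
  unfold effRate
  rw [hp.eq_one x hx]
  split_ifs <;> ring

lemma effRate_of_le {x t : ℝ} (h : t ≤ r x) :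
    effRate p r α k x t = (r x - t) ^ α * (1 - p x) - k * (1 + t) ^ α * p x := by
  unfold effRate
  rw [if_pos (sub_nonneg.2 h)]

lemma effRate_neg_of_lt (hp : FailureProb p) (hk : 0 < k) {x t : ℝ} (ht : 0 ≤ t) (h : r x < t) :
    effRate p r α k x t < 0 := by
  unfold effRate
  rw [if_neg (by linarith)]
  have h1 : 0 < (t - r x) ^ α := rpow_pos_of_pos (by linarith) _
  have h2 : 0 < (1 + t) ^ α := rpow_pos_of_pos (by linarith) _
  obtain ⟨h3, h4⟩ := hp.mem_unit x
  have : 0 < (t - r x) ^ α * (1 - p x) + (1 + t) ^ α * p x := by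
    rcases h3.eq_or_lt with h5 | h5
    · rw [← h5]; simpa using h1
    · have := mul_nonneg h1.le (sub_nonneg.2 h4)
      have := mul_pos h2 h5
      linarith
  have := mul_pos hk this
  linarith

lemma effRate_of_one_le_neg (hp : FailureProb p) (hk : 0 < k) {x t : ℝ} (ht : 0 ≤ t)
    (hx : 1 ≤ x) : effRate p r α k x t < 0 := by
  rw [effRate_of_one_le hp hx]
  have := mul_pos hk (rpow_pos_of_pos (by linarith : 0 < 1 + t) α)
  linarith

lemma effRate_eq_numF (hp : FailureProb p) {x t : ℝ} (hx0 : 0 ≤ x) (hx1 : x < 1) (ht : 0 ≤ t)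
    (h : t < r x) :
    effRate p r α k x t = (r x - t) ^ α * (1 - p x) * numF p r α k x t := by
  rw [effRate_of_le h.le, numF, div_rpow (by linarith) (by linarith)]
  have h1 : 0 < 1 - p x := sub_pos.2 (hp.lt_one hx0 hx1)
  have h2 : 0 < (r x - t) ^ α := rpow_pos_of_pos (by linarith) _
  field_simp

lemma factor_pos (hp : FailureProb p) {x t : ℝ} (hx0 : 0 ≤ x) (hx1 : x < 1) (h : t < r x) :
    0 < (r x - t) ^ α * (1 - p x) :=
  mul_pos (rpow_pos_of_pos (by linarith) _) (sub_pos.2 (hp.lt_one hx0 hx1))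

lemma effRate_pos_iff (hp : FailureProb p) (hα : 0 < α) (hk : 0 < k) {x t : ℝ} (hx0 : 0 ≤ x)
    (ht : 0 ≤ t) :
    0 < effRate p r α k x t ↔ x < 1 ∧ t < r x ∧ 0 < numF p r α k x t := by
  constructor
  · intro h
    have hx1 : x < 1 := by
      by_contra! hx
      exact absurd h (effRate_of_one_le_neg hp hk ht hx).not_gt
    have htr : t < r x := by
      by_contra! hx
      rcases hx.eq_or_lt with h1 | h1
      · rw [effRate_of_le h1.ge, h1, sub_self, zero_rpow hα.ne'] at h
        have := mul_nonneg (mul_pos hk (rpow_pos_of_pos (by linarith : 0 < 1 + t) α)).le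
          (hp.mem_unit x).1
        linarith
      · exact absurd h (effRate_neg_of_lt hp hk ht h1).not_gt
    refine ⟨hx1, htr, ?_⟩
    rw [effRate_eq_numF hp hx0 hx1 ht htr] at h
    exact (mul_pos_iff_of_pos_left (factor_pos hp hx0 hx1 htr)).1 h
  · rintro ⟨hx1, htr, h⟩
    rw [effRate_eq_numF hp hx0 hx1 ht htr]
    exact mul_pos (factor_pos hp hx0 hx1 htr) h

lemma effRate_strictAnti (hp : FailureProb p) (hdec : StrictAntiOn r (Icc (0:ℝ) 1))
    (hα : 0 < α) (hk : 0 < k) {x y t : ℝ} (hx0 : 0 ≤ x) (hxy : x < y) (hy1 : y < 1)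
    (ht : 0 ≤ t) (h : t ≤ r y) : effRate p r α k y t < effRate p r α k x t := by
  have hr' : r y < r x := hdec ⟨hx0, by linarith⟩ ⟨by linarith, hy1.le⟩ hxy
  have hp' : p x < p y := hp.strictMonoOn ⟨hx0, by linarith⟩ ⟨by linarith, hy1⟩ hxy
  rw [effRate_of_le h, effRate_of_le (h.trans hr'.le)]
  have h1 : (r y - t) ^ α < (r x - t) ^ α := rpow_lt_rpow (by linarith) (by linarith) hα
  have h2 : 0 ≤ (r y - t) ^ α := rpow_nonneg (by linarith) _
  have h3 : 0 < k * (1 + t) ^ α := mul_pos hk (rpow_pos_of_pos (by linarith) α)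
  have h4 := (hp.mem_unit y).2
  have h5 := mul_lt_mul_of_pos_left hp' h3
  have h6 : (r y - t) ^ α * (1 - p y) ≤ (r x - t) ^ α * (1 - p x) :=
    mul_le_mul h1.le (by linarith) (by linarith) (by linarith)
  linarith

/-- Without tax the effective rate is antitone on all of `[0, ∞)`, since `r` is positive. -/
lemma effRate_zero_anti (hp : FailureProb p) (hr : RateOfReturn r)
    (hdec : StrictAntiOn r (Icc (0:ℝ) 1)) (hα : 0 < α) (hk : 0 < k) {x y : ℝ} (hx0 : 0 ≤ x)
    (hxy : x ≤ y) : effRate p r α k y 0 ≤ effRate p r α k x 0 := by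
  rcases hxy.eq_or_lt with rfl | hxy
  · exact le_rfl
  rcases lt_or_ge y 1 with hy | hy
  · exact (effRate_strictAnti hp hdec hα hk hx0 hxy hy le_rfl
      (hr.pos y ⟨by linarith, hy.le⟩).le).le
  rw [effRate_of_one_le hp hy]
  rcases lt_or_ge x 1 with hx | hx
  · have hrx := hr.pos x ⟨hx0, hx.le⟩
    rw [effRate_of_le hrx.le]
    obtain ⟨h1, h2⟩ := hp.mem_unit x
    have h3 : 0 ≤ (r x - 0) ^ α * (1 - p x) :=
      mul_nonneg (rpow_nonneg (by linarith) _) (by linarith)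
    have h4 : 0 < k * (1 + 0) ^ α := mul_pos hk (rpow_pos_of_pos (by norm_num) _)
    nlinarith
  · rw [effRate_of_one_le hp hx]

lemma ratio_rpow_mono (hdec : StrictAntiOn r (Icc (0:ℝ) 1)) (hα : 0 < α) {x x' t t' : ℝ}
    (hx0 : 0 ≤ x) (hxx : x ≤ x') (hx1 : x' < 1) (ht : 0 ≤ t) (htt : t ≤ t') (h : t' < r x') :
    ((1 + t) / (r x - t)) ^ α ≤ ((1 + t') / (r x' - t')) ^ α := by
  have hrr : r x' ≤ r x := hdec.antitoneOn ⟨hx0, by linarith⟩ ⟨by linarith, hx1.le⟩ hxx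
  refine rpow_le_rpow (div_nonneg (by linarith) (by linarith)) ?_ hα.le
  exact div_le_div₀ (by linarith) (by linarith) (by linarith) (by linarith)

lemma numF_anti (hp : FailureProb p) (hdec : StrictAntiOn r (Icc (0:ℝ) 1))
    (hα : 0 < α) (hk : 0 < k) {x x' t t' : ℝ}
    (hx0 : 0 ≤ x) (hxx : x ≤ x') (hx1 : x' < 1) (ht : 0 ≤ t) (htt : t ≤ t') (h : t' < r x') :
    numF p r α k x' t' ≤ numF p r α k x t := by
  have hc := ratio_rpow_mono hdec hα hx0 hxx hx1 ht htt h
  have hrr : r x' ≤ r x := hdec.antitoneOn ⟨hx0, by linarith⟩ ⟨by linarith, hx1.le⟩ hxx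
  have hpp : p x ≤ p x' := hp.strictMonoOn.monotoneOn ⟨hx0, by linarith⟩ ⟨by linarith, hx1⟩ hxx
  have h1 := hp.lt_one (hx0.trans hxx) hx1
  have h2 := (hp.mem_unit x).1
  have h3 : p x / (1 - p x) ≤ p x' / (1 - p x') :=
    div_le_div₀ (by linarith) hpp (by linarith) (by linarith)
  have h4 : 0 ≤ ((1 + t) / (r x - t)) ^ α :=
    rpow_nonneg (div_nonneg (by linarith) (by linarith)) _
  have h5 : 0 ≤ p x / (1 - p x) := div_nonneg h2 (by linarith)
  unfold numF
  have := mul_le_mul (mul_le_mul_of_nonneg_left hc hk.le) h3 h5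
    (mul_nonneg hk.le (h4.trans hc))
  linarith

lemma denF_mono (hp : FailureProb p) (hr : RateOfReturn r) (hdec : StrictAntiOn r (Icc (0:ℝ) 1))
    (hα : 0 < α) (hk : 0 < k) {x x' t t' : ℝ}
    (hx0 : 0 < x) (hxx : x ≤ x') (hx1 : x' < 1) (ht : 0 ≤ t) (htt : t ≤ t') (h : t' < r x') :
    denF p r α k x t ≤ denF p r α k x' t' := by
  have hc := ratio_rpow_mono hdec hα hx0.le hxx hx1 ht htt h
  have hrr : r x' ≤ r x := hdec.antitoneOn ⟨hx0.le, by linarith⟩ ⟨by linarith, hx1.le⟩ hxx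
  have hpp : p x ≤ p x' :=
    hp.strictMonoOn.monotoneOn ⟨hx0.le, by linarith⟩ ⟨by linarith, hx1⟩ hxx
  have h1 := hp.lt_one (hx0.le.trans hxx) hx1
  have hx : x ∈ Ioo (0:ℝ) 1 := ⟨hx0, by linarith⟩
  have hx' : x' ∈ Ioo (0:ℝ) 1 := ⟨by linarith, hx1⟩
  have hdp := hp.deriv_mono hx hx' hxx
  have hdr := hr.deriv_anti hx hx' hxx
  have h2 := hp.deriv_pos hx
  have h2' := hp.deriv_pos hx'
  have h3' := hr.deriv_nonpos hdec hx'
  have h4 : 0 ≤ ((1 + t) / (r x - t)) ^ α :=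
    rpow_nonneg (div_nonneg (by linarith) (by linarith)) _
  have h5 : deriv p x / (1 - p x) ≤ deriv p x' / (1 - p x') :=
    div_le_div₀ h2'.le hdp (by linarith) (by linarith)
  have h6 : 0 ≤ deriv p x / (1 - p x) := div_nonneg h2.le (by linarith)
  have h7 : -deriv r x / (r x - t) ≤ -deriv r x' / (r x' - t') :=
    div_le_div₀ (by linarith) (by linarith) (by linarith) (by linarith)
  have h8 := mul_le_mul_of_nonneg_left hc hk.le
  have h9 := mul_nonneg hk.le h4
  unfold denF
  exact add_le_add (mul_le_mul_of_nonneg_left h7 hα.le)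
    (mul_le_mul (by linarith) h5 h6 (by linarith))

lemma denF_pos (hp : FailureProb p) (hr : RateOfReturn r) (hdec : StrictAntiOn r (Icc (0:ℝ) 1))
    (hα : 0 < α) (hk : 0 < k) {x t : ℝ} (hx : x ∈ Ioo (0:ℝ) 1) (ht : 0 ≤ t) (h : t < r x) :
    0 < denF p r α k x t := by
  have h1 := hp.lt_one hx.1.le hx.2
  have h2 := hp.deriv_pos hx
  have h3 := hr.deriv_nonpos hdec hx
  have h4 : 0 ≤ ((1 + t) / (r x - t)) ^ α :=
    rpow_nonneg (div_nonneg (by linarith) (by linarith)) _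
  have h6 : 0 < deriv p x / (1 - p x) := div_pos h2 (by linarith)
  have h7 : 0 ≤ -deriv r x / (r x - t) := div_nonneg (by linarith) (by linarith)
  have h9 := mul_nonneg hk.le h4
  unfold denF
  have := mul_nonneg hα.le h7
  have := mul_pos (by linarith : 0 < 1 + k * ((1 + t) / (r x - t)) ^ α) h6
  linarith

lemma share_anti (hp : FailureProb p) (hr : RateOfReturn r) (hdec : StrictAntiOn r (Icc (0:ℝ) 1))
    (hα : 0 < α) (hk : 0 < k) {x x' t t' : ℝ}
    (hx0 : 0 < x) (hxx : x ≤ x') (hx1 : x' < 1) (ht : 0 ≤ t) (htt : t ≤ t') (h : t' < r x') :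
    share p r α k x' t' ≤ share p r α k x t := by
  have hrr : r x' ≤ r x := hdec.antitoneOn ⟨hx0.le, by linarith⟩ ⟨by linarith, hx1.le⟩ hxx
  unfold share
  refine div_le_div₀ (mul_nonneg hα.le (le_max_right _ _)) ?_
    (denF_pos hp hr hdec hα hk ⟨hx0, by linarith⟩ ht (by linarith))
    (denF_mono hp hr hdec hα hk hx0 hxx hx1 ht htt h)
  exact mul_le_mul_of_nonneg_left
    (max_le_max (numF_anti hp hdec hα hk hx0.le hxx hx1 ht htt h) le_rfl) hα.le

/-- Positivity of the effective rate is inherited by smaller investments and tax rates. -/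
lemma effRate_pos_of_le (hp : FailureProb p) (hdec : StrictAntiOn r (Icc (0:ℝ) 1))
    (hα : 0 < α) (hk : 0 < k) {x x' t t' : ℝ} (hx0 : 0 ≤ x) (hxx : x ≤ x') (ht : 0 ≤ t)
    (htt : t ≤ t') (h : 0 < effRate p r α k x' t') : 0 < effRate p r α k x t := by
  obtain ⟨h1, h2, h3⟩ := (effRate_pos_iff hp hα hk (hx0.trans hxx) (ht.trans htt)).1 h
  have hrr : r x' ≤ r x := hdec.antitoneOn ⟨hx0, by linarith⟩ ⟨by linarith, h1.le⟩ hxx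
  exact (effRate_pos_iff hp hα hk hx0 ht).2
    ⟨by linarith, by linarith, h3.trans_le (numF_anti hp hdec hα hk hx0 hxx h1 ht htt h2)⟩

lemma hasDerivAt_effRate (hp : FailureProb p) (hr : RateOfReturn r) {x t : ℝ}
    (hx : x ∈ Ioo (0:ℝ) 1) (ht : 0 ≤ t) (h : t < r x) :
    HasDerivAt (fun z => effRate p r α k z t)
      (-((r x - t) ^ α * (1 - p x) * denF p r α k x t)) x := by
  have hdr := (hr.differentiableAt hx).hasDerivAt
  have hdp := (hp.differentiableAt hx).hasDerivAt
  have hA : 0 < r x - t := by linarith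
  have h1 := ((((hdr.sub_const t).rpow_const (p := α) (Or.inl hA.ne')).mul (hdp.const_sub 1)).sub
    (hdp.const_mul (k * (1 + t) ^ α)))
  have hev : (fun z => effRate p r α k z t) =ᶠ[nhds x]
      fun z => (r z - t) ^ α * (1 - p z) - k * (1 + t) ^ α * p z := by
    filter_upwards [hdr.continuousAt.eventually (lt_mem_nhds h)] with z hz
    exact effRate_of_le (le_of_lt hz)
  refine (HasDerivAt.congr_of_eventuallyEq ?_ hev)
  refine h1.congr_deriv ?_
  have h2 : 0 < 1 - p x := sub_pos.2 (hp.lt_one hx.1.le hx.2)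
  have h3 : 0 < (r x - t) ^ α := rpow_pos_of_pos hA _
  rw [denF, div_rpow (by linarith) hA.le, rpow_sub_one hA.ne']
  field_simp
  ring

/-- The derivative of the utility in the player's own investment `y`, when the others invest `c`. -/
lemma hasDerivAt_utility (hp : FailureProb p) (hr : RateOfReturn r) {y c t : ℝ} (hy : 0 < y)
    (hx : y + c ∈ Ioo (0:ℝ) 1) (ht : 0 ≤ t) (h : t < r (y + c)) :
    HasDerivAt (fun z => z ^ α * effRate p r α k (z + c) t)
      (y ^ (α - 1) * ((r (y + c) - t) ^ α * (1 - p (y + c))) *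
        (α * numF p r α k (y + c) t - y * denF p r α k (y + c) t)) y := by
  have h1 : HasDerivAt (fun z : ℝ => z ^ α) (α * y ^ (α - 1)) y :=
    Real.hasDerivAt_rpow_const (Or.inl hy.ne')
  have h2 := (hasDerivAt_effRate (α := α) (k := k) hp hr hx ht h).comp_add_const y c
  refine (h1.mul h2).congr_deriv ?_
  rw [effRate_eq_numF hp hx.1.le hx.2 ht h, rpow_sub_one hy.ne']
  field_simp
  ring

end Rate

/-! ### Best responses and the first-order condition -/

lemma deriv_nonneg_of_left {h : ℝ → ℝ} {h' a b : ℝ} (hd : HasDerivAt h h' a) (hb : b < a)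
    (hle : ∀ y ∈ Ioo b a, h y ≤ h a) : 0 ≤ h' := by
  have ht : Filter.Tendsto (slope h a) (nhdsWithin a (Iio a)) (nhds h') :=
    hd.tendsto_slope.mono_left (nhdsWithin_mono _ fun y hy => ne_of_lt hy)
  refine ge_of_tendsto ht ?_
  filter_upwards [Ioo_mem_nhdsLT hb] with y hy
  rw [slope_def_field]
  exact div_nonneg_of_nonpos (by linarith [hle y hy]) (by linarith [hy.2])

lemma deriv_nonpos_of_right {h : ℝ → ℝ} {h' a b : ℝ} (hd : HasDerivAt h h' a) (hb : a < b)
    (hle : ∀ y ∈ Ioo a b, h y ≤ h a) : h' ≤ 0 := by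
  have ht : Filter.Tendsto (slope h a) (nhdsWithin a (Ioi a)) (nhds h') :=
    hd.tendsto_slope.mono_left (nhdsWithin_mono _ fun y hy => ne_of_gt hy)
  refine le_of_tendsto ht ?_
  filter_upwards [Ioo_mem_nhdsGT hb] with y hy
  rw [slope_def_field]
  exact div_nonpos_of_nonpos_of_nonneg (by linarith [hle y hy]) (by linarith [hy.1])

section BestResponse

variable {p r : ℝ → ℝ} {α k : ℝ}

/-- If lowering a positive investment does not pay, the effective rate is positive and the
investment is at most the one dictated by the first-order condition. -/
lemma le_share_of_left_optimal (hp : FailureProb p) (hr : RateOfReturn r)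
    (hdec : StrictAntiOn r (Icc (0:ℝ) 1)) (hα : 0 < α) (hk : 0 < k) {x c t : ℝ} (hx : 0 < x)
    (hc : 0 ≤ c) (ht : 0 ≤ t)
    (hopt : ∀ y ∈ Icc 0 x, y ^ α * effRate p r α k (y + c) t ≤ x ^ α * effRate p r α k (x + c) t) :
    0 < effRate p r α k (x + c) t ∧ x ≤ share p r α k (x + c) t := by
  have hxa : 0 < x ^ α := rpow_pos_of_pos hx _
  have hf0 : 0 ≤ effRate p r α k (x + c) t := by
    have := hopt 0 ⟨le_rfl, hx.le⟩
    rw [zero_rpow hα.ne', zero_mul] at this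
    exact nonneg_of_mul_nonneg_right this hxa
  have hX1 : x + c < 1 := by
    by_contra! h
    exact absurd hf0 (effRate_of_one_le_neg hp hk ht h).not_ge
  have htr : t ≤ r (x + c) := by
    by_contra! h
    exact absurd hf0 (effRate_neg_of_lt hp hk ht h).not_ge
  have hf : 0 < effRate p r α k (x + c) t := by
    refine lt_of_le_of_ne hf0 fun h0 => ?_
    -- with zero effective rate, halving the investment makes the utility positive
    have h1 := effRate_strictAnti (α := α) (k := k) hp hdec hα hk
      (by linarith : 0 ≤ x / 2 + c) (by linarith : x / 2 + c < x + c) hX1 ht htr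
    have h2 := hopt (x / 2) ⟨by linarith, by linarith⟩
    rw [← h0, mul_zero] at h2
    rw [← h0] at h1
    have := mul_pos (rpow_pos_of_pos (half_pos hx) α) h1
    linarith
  refine ⟨hf, ?_⟩
  obtain ⟨-, htr', hnum⟩ := (effRate_pos_iff hp hα hk (by linarith) ht).1 hf
  have hX : x + c ∈ Ioo (0:ℝ) 1 := ⟨by linarith, hX1⟩
  have hd := hasDerivAt_utility (α := α) (k := k) hp hr hx hX ht htr'
  have h1 := deriv_nonneg_of_left hd hx fun y hy => hopt y ⟨hy.1.le, hy.2.le⟩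
  have h2 := nonneg_of_mul_nonneg_right h1
    (mul_pos (rpow_pos_of_pos hx _) (factor_pos hp hX.1.le hX1 htr'))
  rw [share, max_eq_left hnum.le, le_div_iff₀ (denF_pos hp hr hdec hα hk hX ht htr')]
  linarith

lemma continuousWithinAt_effRate (hp : FailureProb p) (hr : RateOfReturn r) (hα : 0 < α)
    {x t : ℝ} (hx : x ∈ Ico (0:ℝ) 1) (h : t < r x) :
    ContinuousWithinAt (fun z => effRate p r α k z t) (Ico (0:ℝ) 1) x := by
  have hcr : ContinuousWithinAt r (Ico (0:ℝ) 1) x :=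
    (hr.contDiffOn.continuousOn x ⟨hx.1, hx.2.le⟩).mono Ico_subset_Icc_self
  have hcp : ContinuousWithinAt p (Ico (0:ℝ) 1) x := hp.contDiffOn.continuousOn x hx
  have hev : (fun z => effRate p r α k z t) =ᶠ[nhdsWithin x (Ico (0:ℝ) 1)]
      fun z => (r z - t) ^ α * (1 - p z) - k * (1 + t) ^ α * p z := by
    filter_upwards [hcr.eventually (lt_mem_nhds h)] with z hz
    exact effRate_of_le (le_of_lt hz)
  refine ContinuousWithinAt.congr_of_eventuallyEq ?_ hev (effRate_of_le h.le)
  exact (((hcr.sub continuousWithinAt_const).rpow_const (Or.inr hα.le)).mul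
    (continuousWithinAt_const.sub hcp)).sub (continuousWithinAt_const.mul hcp)

/-- A positive effective rate makes a small positive investment profitable. -/
lemma exists_pos_utility (hp : FailureProb p) (hr : RateOfReturn r) (hα : 0 < α)
    (hk : 0 < k) {c t : ℝ} (hc : 0 ≤ c) (ht : 0 ≤ t) (h : 0 < effRate p r α k c t) :
    ∃ y ∈ Icc (0:ℝ) 1, 0 < y ^ α * effRate p r α k (y + c) t := by
  obtain ⟨h1, h2, -⟩ := (effRate_pos_iff hp hα hk hc ht).1 h
  have hcont := continuousWithinAt_effRate (k := k) hp hr hα ⟨hc, h1⟩ h2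
  have hev : ∀ᶠ z in nhdsWithin c (Ioo c 1), 0 < effRate p r α k z t ∧ z ∈ Ioo c 1 :=
    ((hcont.mono fun z hz => ⟨hc.trans hz.1.le, hz.2⟩).eventually (lt_mem_nhds h)).and
      self_mem_nhdsWithin
  rw [nhdsWithin_Ioo_eq_nhdsGT h1] at hev
  obtain ⟨z, hz, hz1, hz2⟩ := hev.exists
  refine ⟨z - c, ⟨by linarith, by linarith⟩, ?_⟩
  rw [sub_add_cancel]
  exact mul_pos (rpow_pos_of_pos (by linarith) _) hz

/-- If raising the investment does not pay and the effective rate is positive, the investment is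
at least the one dictated by the first-order condition. -/
lemma share_le_of_right_optimal (hp : FailureProb p) (hr : RateOfReturn r)
    (hdec : StrictAntiOn r (Icc (0:ℝ) 1)) (hα : 0 < α) (hk : 0 < k) {x c t : ℝ} (hx : 0 ≤ x)
    (hc : 0 ≤ c) (hxc : 0 < x + c) (ht : 0 ≤ t)
    (hopt : ∀ y ∈ Icc x 1, y ^ α * effRate p r α k (y + c) t ≤ x ^ α * effRate p r α k (x + c) t)
    (hf : 0 < effRate p r α k (x + c) t) : share p r α k (x + c) t ≤ x := by
  obtain ⟨hX1, htr, hnum⟩ := (effRate_pos_iff hp hα hk hxc.le ht).1 hf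
  have hX : x + c ∈ Ioo (0:ℝ) 1 := ⟨hxc, hX1⟩
  rcases hx.eq_or_lt with rfl | hx
  · exfalso
    rw [zero_add] at hf
    obtain ⟨y, hy, hpos⟩ := exists_pos_utility hp hr hα hk hc ht hf
    have := hopt y hy
    rw [zero_rpow hα.ne', zero_mul] at this
    linarith
  have hd := hasDerivAt_utility (α := α) (k := k) hp hr hx hX ht htr
  have h1 := deriv_nonpos_of_right hd (by linarith : x < 1)
    fun y hy => hopt y ⟨hy.1.le, hy.2.le⟩
  have h2 := mul_pos (rpow_pos_of_pos hx (α - 1))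
    (factor_pos (α := α) hp hX.1.le hX1 htr)
  have h3 : α * numF p r α k (x + c) t - x * denF p r α k (x + c) t ≤ 0 := by
    by_contra! h
    exact absurd h1 (mul_pos h2 h).not_ge
  rw [share, max_eq_left hnum.le, div_le_iff₀ (denF_pos hp hr hdec hα hk hX ht htr)]
  linarith

lemma continuousOn_utility (hp : FailureProb p) (hr : RateOfReturn r)
    (hdec : StrictAntiOn r (Icc (0:ℝ) 1)) (hα : 0 < α) (hk : 0 < k) {a b c t : ℝ} (ha : 0 ≤ a)
    (hc : 0 ≤ c) (ht : 0 ≤ t) (hf : 0 < effRate p r α k (b + c) t) :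
    ContinuousOn (fun z => z ^ α * effRate p r α k (z + c) t) (Icc a b) := by
  intro z hz
  have hz0 : 0 ≤ z := ha.trans hz.1
  have hfz := effRate_pos_of_le hp hdec hα hk (by linarith) (by linarith [hz.2] : z + c ≤ b + c)
    ht le_rfl hf
  obtain ⟨h1, h2, -⟩ := (effRate_pos_iff hp hα hk (by linarith) ht).1 hfz
  obtain ⟨h3, -, -⟩ := (effRate_pos_iff hp hα hk (by linarith [hz.2]) ht).1 hf
  refine ContinuousWithinAt.mul
    (continuousWithinAt_id.rpow_const (Or.inr hα.le)) ?_
  have := continuousWithinAt_effRate (k := k) hp hr hα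
    (⟨by linarith, h1⟩ : z + c ∈ Ico (0:ℝ) 1) h2
  exact ContinuousWithinAt.comp (t := Ico (0:ℝ) 1) (f := fun z => z + c) this
    (continuousWithinAt_id.add continuousWithinAt_const)
    fun w hw => ⟨by linarith [hw.1], by linarith [hw.2]⟩

/-- The first-order condition is sufficient: the sign of the marginal utility at `y` is that of
`α * numF - y * denF`, and this changes sign only once because `numF` is antitone and `denF` is
monotone in the total investment. -/
lemma utility_le_of_foc (hp : FailureProb p) (hr : RateOfReturn r)
    (hdec : StrictAntiOn r (Icc (0:ℝ) 1)) (hα : 0 < α) (hk : 0 < k) {z c t : ℝ} (hz : 0 < z)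
    (hc : 0 ≤ c) (ht : 0 ≤ t) (hf : 0 < effRate p r α k (z + c) t)
    (hfoc : z = share p r α k (z + c) t) {y : ℝ} (hy : 0 ≤ y) :
    y ^ α * effRate p r α k (y + c) t ≤ z ^ α * effRate p r α k (z + c) t := by
  obtain ⟨hX1, htr, hnum⟩ := (effRate_pos_iff hp hα hk (by linarith) ht).1 hf
  have hX : z + c ∈ Ioo (0:ℝ) 1 := ⟨by linarith, hX1⟩
  have hfoc' : α * numF p r α k (z + c) t = z * denF p r α k (z + c) t := by
    rw [share, max_eq_left hnum.le, eq_div_iff (denF_pos hp hr hdec hα hk hX ht htr).ne'] at hfoc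
    exact hfoc.symm
  rcases le_or_gt (effRate p r α k (y + c) t) 0 with hfy | hfy
  · exact (mul_nonpos_of_nonneg_of_nonpos (rpow_nonneg hy _) hfy).trans
      (mul_pos (rpow_pos_of_pos hz _) hf).le
  obtain ⟨hY1, htry, hnumy⟩ := (effRate_pos_iff hp hα hk (by linarith) ht).1 hfy
  rcases le_total y z with hyz | hyz
  · refine monotoneOn_of_deriv_nonneg (convex_Icc y z)
      (continuousOn_utility hp hr hdec hα hk hy hc ht hf) ?_ ?_ ⟨le_rfl, hyz⟩ ⟨hyz, le_rfl⟩ hyz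
    all_goals
      rw [interior_Icc]
      intro w hw
      have hw0 : 0 < w := hy.trans_lt hw.1
      have hwz := hw.2
      have hfw := effRate_pos_of_le hp hdec hα hk (by linarith) (by linarith : w + c ≤ z + c)
        ht le_rfl hf
      obtain ⟨hw1, htw, -⟩ := (effRate_pos_iff hp hα hk (by linarith) ht).1 hfw
      have hW : w + c ∈ Ioo (0:ℝ) 1 := ⟨by linarith, hw1⟩
      have hd := hasDerivAt_utility (α := α) (k := k) hp hr hw0 hW ht htw
    · exact hd.differentiableAt.differentiableWithinAt
    · rw [hd.deriv]
      refine mul_nonneg (mul_pos (rpow_pos_of_pos hw0 _) (factor_pos hp hW.1.le hw1 htw)).le ?_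
      have h1 := mul_le_mul_of_nonneg_left (numF_anti (k := k) hp hdec hα hk hW.1.le
        (by linarith : w + c ≤ z + c) hX1 ht le_rfl htr) hα.le
      have h2 := mul_le_mul hwz.le (denF_mono (k := k) hp hr hdec hα hk hW.1
        (by linarith : w + c ≤ z + c) hX1 ht le_rfl htr)
        (denF_pos hp hr hdec hα hk hW ht htw).le hz.le
      linarith
  · refine antitoneOn_of_deriv_nonpos (convex_Icc z y)
      (continuousOn_utility hp hr hdec hα hk hz.le hc ht hfy) ?_ ?_ ⟨le_rfl, hyz⟩ ⟨hyz, le_rfl⟩ hyz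
    all_goals
      rw [interior_Icc]
      intro w hw
      have hw0 : 0 < w := hz.trans hw.1
      have hwz := hw.1
      have hfw := effRate_pos_of_le hp hdec hα hk (by linarith)
        (by linarith [hw.2] : w + c ≤ y + c) ht le_rfl hfy
      obtain ⟨hw1, htw, -⟩ := (effRate_pos_iff hp hα hk (by linarith) ht).1 hfw
      have hW : w + c ∈ Ioo (0:ℝ) 1 := ⟨by linarith, hw1⟩
      have hd := hasDerivAt_utility (α := α) (k := k) hp hr hw0 hW ht htw
    · exact hd.differentiableAt.differentiableWithinAt
    · rw [hd.deriv]
      refine mul_nonpos_of_nonneg_of_nonpos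
        (mul_pos (rpow_pos_of_pos hw0 _) (factor_pos hp hW.1.le hw1 htw)).le ?_
      have h1 := mul_le_mul_of_nonneg_left (numF_anti (k := k) hp hdec hα hk hX.1.le
        (by linarith : z + c ≤ w + c) hw1 ht le_rfl htw) hα.le
      have h2 := mul_le_mul hwz.le (denF_mono (k := k) hp hr hdec hα hk hX.1
        (by linarith : z + c ≤ w + c) hw1 ht le_rfl htw)
        (denF_pos hp hr hdec hα hk hX ht htr).le hw0.le
      linarith

lemma continuous_effRate_tax (hα : 0 < α) (a b d : ℝ) :
    Continuous fun t : ℝ => (a - t) ^ α * b - k * (1 + t) ^ α * d := by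
  have h1 : Continuous fun t : ℝ => (a - t) ^ α :=
    (continuous_const.sub continuous_id).rpow_const fun _ => Or.inr hα.le
  have h2 : Continuous fun t : ℝ => (1 + t) ^ α :=
    (continuous_const.add continuous_id).rpow_const fun _ => Or.inr hα.le
  exact (h1.mul continuous_const).sub ((continuous_const.mul h2).mul continuous_const)

lemma continuousOn_share_tax (hp : FailureProb p) (hr : RateOfReturn r)
    (hdec : StrictAntiOn r (Icc (0:ℝ) 1)) (hα : 0 < α) (hk : 0 < k) {x T : ℝ}
    (hx : x ∈ Ioo (0:ℝ) 1) (hT : T < r x) :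
    ContinuousOn (fun t => share p r α k x t) (Icc 0 T) := by
  have hne : ∀ t ∈ Icc 0 T, r x - t ≠ 0 := fun t ht =>
    (sub_pos.2 (ht.2.trans_lt hT)).ne'
  have hA : ContinuousOn (fun t : ℝ => r x - t) (Icc 0 T) :=
    continuousOn_const.sub continuousOn_id
  have hc : ContinuousOn (fun t : ℝ => ((1 + t) / (r x - t)) ^ α) (Icc 0 T) :=
    ((continuousOn_const.add continuousOn_id).div hA hne).rpow_const fun _ _ => Or.inr hα.le
  unfold share numF denF
  refine ContinuousOn.div ?_ ?_ fun t ht =>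
    (denF_pos hp hr hdec hα hk hx ht.1 (ht.2.trans_lt hT)).ne'
  · exact continuousOn_const.mul (ContinuousOn.sup (continuousOn_const.sub
      ((continuousOn_const.mul hc).mul continuousOn_const)) continuousOn_const)
  · exact (continuousOn_const.mul (continuousOn_const.div hA hne)).add
      ((continuousOn_const.add (continuousOn_const.mul hc)).mul continuousOn_const)

lemma share_nonneg (hp : FailureProb p) (hr : RateOfReturn r)
    (hdec : StrictAntiOn r (Icc (0:ℝ) 1)) (hα : 0 < α) (hk : 0 < k) {x t : ℝ}
    (hx : x ∈ Ioo (0:ℝ) 1) (ht : 0 ≤ t) (h : t < r x) : 0 ≤ share p r α k x t :=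
  div_nonneg (mul_nonneg hα.le (le_max_right _ _)) (denF_pos hp hr hdec hα hk hx ht h).le

end BestResponse

/-! ### Equilibria -/

section Game

variable {ι : Type*} [Fintype ι] {p r : ℝ → ℝ} {α k : ι → ℝ}

/-- The set of taxes whose supremum is `tbar` is bounded above by `r 0`, so `tbar` is a genuine
supremum. -/
lemma le_tbar (hp : FailureProb p)
    (hdec : StrictAntiOn r (Icc (0:ℝ) 1)) (hα : ∀ i, α i ∈ Ioc (0:ℝ) 1) (hk : ∀ i, 0 < k i)
    {i : ι} {x t : ℝ} (hx : 0 ≤ x) (ht : 0 ≤ t) (hf : 0 < effRate p r (α i) (k i) x t) :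
    t ≤ tbar p r α k := by
  refine le_csSup ⟨r 0, ?_⟩ ⟨ht, i, x, ⟨hx, ?_⟩, hf⟩
  · rintro s ⟨hs, j, y, hy, hfs⟩
    exact ((effRate_pos_iff hp (hα j).1 (hk j) hy.1 hs).1 hfs).2.1.le.trans
      (hdec.antitoneOn ⟨le_rfl, zero_le_one⟩ hy hy.1)
  · exact ((effRate_pos_iff hp (hα i).1 (hk i) hx ht).1 hf).1.le

/-- The supremum defining `tbar` is not attained: positivity of a rate persists for slightly
larger taxes. -/
lemma effRate_tbar_nonpos (hp : FailureProb p)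
    (hdec : StrictAntiOn r (Icc (0:ℝ) 1)) (hα : ∀ i, α i ∈ Ioc (0:ℝ) 1) (hk : ∀ i, 0 < k i)
    (htbar : 0 < tbar p r α k) (i : ι) {x : ℝ} (hx : 0 ≤ x) :
    effRate p r (α i) (k i) x (tbar p r α k) ≤ 0 := by
  by_contra! hf
  have htr := ((effRate_pos_iff hp (hα i).1 (hk i) hx htbar.le).1 hf).2.1
  rw [effRate_of_le htr.le] at hf
  have hev : ∀ᶠ t in nhdsWithin (tbar p r α k) (Ioi (tbar p r α k)),
      0 < (r x - t) ^ α i * (1 - p x) - k i * (1 + t) ^ α i * p x ∧ t < r x :=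
    (((continuous_effRate_tax (k := k i) (hα i).1 (r x) (1 - p x) (p x)).continuousAt.eventually
      (lt_mem_nhds hf)).and (gt_mem_nhds htr)).filter_mono nhdsWithin_le_nhds
  obtain ⟨t, ⟨h1, h2⟩, h3⟩ := (hev.and self_mem_nhdsWithin).exists
  rw [← effRate_of_le h2.le] at h1
  exact absurd (le_tbar hp hdec hα hk hx (htbar.le.trans (le_of_lt h3)) h1) (not_le.2 h3)

variable [DecidableEq ι]

lemma others_nonneg {z : ι → ℝ} (hz : ∀ i, 0 ≤ z i) (i : ι) :
    0 ≤ ∑ j ∈ Finset.univ.erase i, z j :=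
  Finset.sum_nonneg fun j _ => hz j

lemma own_add_others (z : ι → ℝ) (i : ι) :
    z i + ∑ j ∈ Finset.univ.erase i, z j = ∑ j, z j :=
  Finset.add_sum_erase _ _ (Finset.mem_univ i)

/-- A positive investment in an equilibrium satisfies the first-order bound from above. -/
lemma IsPNE.le_share (hp : FailureProb p) (hr : RateOfReturn r)
    (hdec : StrictAntiOn r (Icc (0:ℝ) 1)) (hα : ∀ i, α i ∈ Ioc (0:ℝ) 1) (hk : ∀ i, 0 < k i)
    {t : ℝ} (ht : 0 ≤ t) {z : ι → ℝ} (hz : IsPNE p r α k t z) (i : ι) (hi : 0 < z i) :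
    0 < effRate p r (α i) (k i) (∑ j, z j) t ∧ z i ≤ share p r (α i) (k i) (∑ j, z j) t := by
  have := le_share_of_left_optimal hp hr hdec (hα i).1 (hk i) hi
    (others_nonneg (fun j => (hz.1 j).1) i) ht
    fun y hy => hz.2 i y ⟨hy.1, hy.2.trans (hz.1 i).2⟩
  rwa [own_add_others] at this

/-- Comparison with the untaxed equilibrium `x0`: a profile whose positive investments satisfy the
first-order bound from above at some tax rate `t ≥ 0` has total investment at most that of `x0`. -/
lemma total_le_of_le_share (hp : FailureProb p) (hr : RateOfReturn r)
    (hdec : StrictAntiOn r (Icc (0:ℝ) 1)) (hα : ∀ i, α i ∈ Ioc (0:ℝ) 1) (hk : ∀ i, 0 < k i)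
    {x0 : ι → ℝ} (hx0 : IsPNE p r α k 0 x0) {t : ℝ} (ht : 0 ≤ t) {z : ι → ℝ}
    (hz0 : ∀ i, 0 ≤ z i)
    (hz : ∀ i, 0 < z i → 0 < effRate p r (α i) (k i) (∑ j, z j) t ∧
      z i ≤ share p r (α i) (k i) (∑ j, z j) t) :
    ∑ j, z j ≤ ∑ j, x0 j := by
  by_contra! hlt
  have hN : 0 ≤ ∑ j, x0 j := Finset.sum_nonneg fun j _ => (hx0.1 j).1
  refine absurd hlt (not_lt.2 (Finset.sum_le_sum fun i _ => ?_))
  rcases (hz0 i).eq_or_lt with h0 | hi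
  · rw [← h0]; exact (hx0.1 i).1
  obtain ⟨hf, hle⟩ := hz i hi
  have hαi := (hα i).1
  obtain ⟨h1, h2, -⟩ := (effRate_pos_iff hp hαi (hk i) (hN.trans hlt.le) ht).1 hf
  have hfN := effRate_pos_of_le hp hdec hαi (hk i) hN hlt.le le_rfl ht hf
  rcases hN.eq_or_lt with hN0 | hNpos
  · -- `x0` would be the zero profile although some effective rate is positive at zero
    exfalso
    have hx00 : ∀ j, x0 j = 0 := fun j =>
      (Finset.sum_eq_zero_iff_of_nonneg fun j _ => (hx0.1 j).1).1 hN0.symm j (Finset.mem_univ j)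
    rw [← hN0] at hfN
    obtain ⟨y, hy, hpos⟩ := exists_pos_utility hp hr hαi (hk i) le_rfl le_rfl hfN
    have := hx0.2 i y hy
    simp only [hx00, Finset.sum_const_zero, zero_rpow hαi.ne', zero_mul] at this
    linarith
  · have hR := share_le_of_right_optimal hp hr hdec hαi (hk i) (hx0.1 i).1
      (others_nonneg (fun j => (hx0.1 j).1) i) (by rw [own_add_others]; exact hNpos) le_rfl
      (fun y hy => hx0.2 i y ⟨(hx0.1 i).1.trans hy.1, hy.2⟩) (by rw [own_add_others]; exact hfN)
    rw [own_add_others] at hR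
    exact hle.trans ((share_anti hp hr hdec hαi (hk i) hNpos hlt.le h1 le_rfl ht h2).trans hR)

/-- A social optimum has at most the utilization of the untaxed equilibrium: lowering one
investment does not hurt the other players, so at an optimum it does not pay for the player
herself, which is the first-order bound from above. -/
lemma opt_total_le (hp : FailureProb p) (hr : RateOfReturn r)
    (hdec : StrictAntiOn r (Icc (0:ℝ) 1)) (hα : ∀ i, α i ∈ Ioc (0:ℝ) 1) (hk : ∀ i, 0 < k i)
    {x0 : ι → ℝ} (hx0 : IsPNE p r α k 0 x0)
    {xOPT : ι → ℝ} (hOPTmem : ∀ i, xOPT i ∈ Icc (0:ℝ) 1)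
    (hOPT : ∀ z : ι → ℝ, (∀ i, z i ∈ Icc (0:ℝ) 1) →
      ∑ i, z i ^ α i * effRate p r (α i) (k i) (∑ l, z l) 0 ≤
        ∑ i, xOPT i ^ α i * effRate p r (α i) (k i) (∑ l, xOPT l) 0) :
    ∑ j, xOPT j ≤ ∑ j, x0 j := by
  refine total_le_of_le_share hp hr hdec hα hk hx0 le_rfl (fun i => (hOPTmem i).1) fun i hi => ?_
  have hc := others_nonneg (fun j => (hOPTmem j).1) i
  have := le_share_of_left_optimal (t := 0) hp hr hdec (hα i).1 (hk i) hi hc le_rfl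
    fun y hy => by
      have hmem : ∀ j, Function.update xOPT i y j ∈ Icc (0:ℝ) 1 := by
        intro j
        rcases eq_or_ne j i with rfl | hj
        · rw [Function.update_self]; exact ⟨hy.1, hy.2.trans (hOPTmem j).2⟩
        · rw [Function.update_of_ne hj]; exact hOPTmem j
      have hsame : ∀ j ∈ Finset.univ.erase i, Function.update xOPT i y j = xOPT j := fun j hj =>
        Function.update_of_ne (Finset.ne_of_mem_erase hj) _ _
      have htot : ∑ l, Function.update xOPT i y l = y + ∑ j ∈ Finset.univ.erase i, xOPT j := by
        rw [← own_add_others, Function.update_self, Finset.sum_congr rfl hsame]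
      have h := hOPT _ hmem
      rw [htot, ← own_add_others (fun j => xOPT j ^ α j * _) i,
        ← own_add_others (fun j => Function.update xOPT i y j ^ α j * _) i,
        Function.update_self, ← own_add_others xOPT i] at h
      have hle : ∑ j ∈ Finset.univ.erase i, xOPT j ^ α j *
            effRate p r (α j) (k j) (xOPT i + ∑ l ∈ Finset.univ.erase i, xOPT l) 0 ≤
          ∑ j ∈ Finset.univ.erase i, Function.update xOPT i y j ^ α j *
            effRate p r (α j) (k j) (y + ∑ l ∈ Finset.univ.erase i, xOPT l) 0 := by
        refine Finset.sum_le_sum fun j hj => ?_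
        rw [hsame j hj]
        exact mul_le_mul_of_nonneg_left (effRate_zero_anti hp hr hdec (hα j).1 (hk j)
          (by linarith [hy.1]) (by linarith [hy.2])) (rpow_nonneg (hOPTmem j).1 _)
      linarith
  rwa [own_add_others] at this

/-- If the shares dictated by the first-order condition at total `X` add up to `X`, they form an
equilibrium. -/
lemma isPNE_share (hp : FailureProb p) (hr : RateOfReturn r)
    (hdec : StrictAntiOn r (Icc (0:ℝ) 1)) (hα : ∀ i, α i ∈ Ioc (0:ℝ) 1) (hk : ∀ i, 0 < k i)
    {t X : ℝ} (ht : 0 ≤ t) (hX : X ∈ Ioo (0:ℝ) 1) (htr : t < r X)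
    (hsum : ∑ i, share p r (α i) (k i) X t = X) :
    IsPNE p r α k t fun i => share p r (α i) (k i) X t := by
  have hnn : ∀ i, 0 ≤ share p r (α i) (k i) X t := fun i =>
    share_nonneg hp hr hdec (hα i).1 (hk i) hX ht htr
  have hadd : ∀ i, share p r (α i) (k i) X t +
      ∑ j ∈ Finset.univ.erase i, share p r (α j) (k j) X t = X := fun i =>
    (own_add_others (fun i => share p r (α i) (k i) X t) i).trans hsum
  have hc := fun i => others_nonneg hnn i
  refine ⟨fun i => ⟨hnn i, by linarith [hadd i, hc i, hX.2]⟩, fun i y hy => ?_⟩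
  beta_reduce
  have hαi := (hα i).1
  rcases lt_or_ge 0 (numF p r (α i) (k i) X t) with hnum | hnum
  · have hz : 0 < share p r (α i) (k i) X t := by
      rw [share, max_eq_left hnum.le]
      exact div_pos (mul_pos hαi hnum) (denF_pos hp hr hdec hαi (hk i) hX ht htr)
    refine utility_le_of_foc hp hr hdec hαi (hk i) hz (hc i) ht ?_ ?_ hy.1
    · rw [hadd]; exact (effRate_pos_iff hp hαi (hk i) hX.1.le ht).2 ⟨hX.2, htr, hnum⟩
    · rw [hadd]
  · have hz : share p r (α i) (k i) X t = 0 := by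
      rw [share, max_eq_right hnum, mul_zero, zero_div]
    have hadd' := hadd i
    rw [hz, zero_add] at hadd'
    rw [hadd', hz, zero_rpow hαi.ne', zero_mul]
    refine mul_nonpos_of_nonneg_of_nonpos (rpow_nonneg hy.1 _) ?_
    by_contra! hf
    have := effRate_pos_of_le hp hdec hαi (hk i) hX.1.le (by linarith [hy.1] : X ≤ y + X) ht
      le_rfl hf
    exact absurd ((effRate_pos_iff hp hαi (hk i) hX.1.le ht).1 this).2.2 (not_lt.2 hnum)

/-- Every utilization level up to that of the untaxed equilibrium is achieved by some tax. For a
positive level, the intermediate value theorem is applied in `t` to the sum of the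
shares, which is at least the level at `t = 0` and vanishes for `t` close to `r xstar`. -/
lemma exists_tax (hp : FailureProb p) (hr : RateOfReturn r)
    (hdec : StrictAntiOn r (Icc (0:ℝ) 1)) (hα : ∀ i, α i ∈ Ioc (0:ℝ) 1) (hk : ∀ i, 0 < k i)
    (htbar : 0 < tbar p r α k) {x0 : ι → ℝ} (hx0 : IsPNE p r α k 0 x0) {xstar : ℝ}
    (hxs : xstar ∈ Icc (0:ℝ) (∑ i, x0 i)) :
    ∃ t ∈ Icc (0:ℝ) (tbar p r α k),
      ∃ x : ι → ℝ, IsPNE p r α k t x ∧ ∑ i, x i = xstar := by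
  obtain ⟨h0, hN⟩ := hxs
  rcases h0.eq_or_lt with rfl | h0
  · refine ⟨tbar p r α k, ⟨htbar.le, le_rfl⟩, fun _ => 0, ⟨fun _ => ⟨le_rfl, zero_le_one⟩, ?_⟩,
      by simp⟩
    intro i y hy
    rw [zero_rpow (hα i).1.ne', zero_mul]
    exact mul_nonpos_of_nonneg_of_nonpos (rpow_nonneg hy.1 _)
      (effRate_tbar_nonpos hp hdec hα hk htbar i (by simpa using hy.1))
  have hfirst := hx0.le_share hp hr hdec hα hk le_rfl
  have hN1 : ∑ i, x0 i < 1 := by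
    obtain ⟨i, -, hi⟩ := Finset.exists_lt_of_sum_lt (s := Finset.univ) (f := fun _ : ι => (0:ℝ))
      (g := x0) (by simpa using h0.trans_le hN)
    exact ((effRate_pos_iff hp (hα i).1 (hk i) (h0.le.trans hN) le_rfl).1 (hfirst i hi).1).1
  have hX : xstar ∈ Ioo (0:ℝ) 1 := ⟨h0, hN.trans_lt hN1⟩
  have hrpos : 0 < r xstar := hr.pos _ ⟨hX.1.le, hX.2.le⟩
  have hppos : 0 < p xstar :=
    (hp.mem_unit 0).1.trans_lt (hp.strictMonoOn ⟨le_rfl, one_pos⟩ ⟨h0.le, hX.2⟩ h0)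
  -- a tax below `r xstar` at which no effective rate is positive
  obtain ⟨T, hT0, hTr, hTf⟩ : ∃ T, 0 ≤ T ∧ T < r xstar ∧
      ∀ i, effRate p r (α i) (k i) xstar T < 0 := by
    have hev : ∀ᶠ t in nhds (r xstar), ∀ i,
        (r xstar - t) ^ α i * (1 - p xstar) - k i * (1 + t) ^ α i * p xstar < 0 := by
      rw [Filter.eventually_all]
      intro i
      refine (continuous_effRate_tax (k := k i) (hα i).1 (r xstar) (1 - p xstar)
        (p xstar)).continuousAt.eventually (gt_mem_nhds ?_)
      beta_reduce
      rw [sub_self, zero_rpow (hα i).1.ne', zero_mul, zero_sub, neg_lt_zero]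
      exact mul_pos (mul_pos (hk i) (rpow_pos_of_pos (by linarith) _)) hppos
    obtain ⟨T, h1, h2, h3⟩ := ((hev.filter_mono nhdsWithin_le_nhds).and
      (Ioo_mem_nhdsLT hrpos)).exists
    exact ⟨T, h2.le, h3, fun i => by rw [effRate_of_le h3.le]; exact h1 i⟩
  have hcont : ContinuousOn (fun t => ∑ i, share p r (α i) (k i) xstar t) (Icc 0 T) :=
    continuousOn_finsetSum _ fun i _ =>
      continuousOn_share_tax hp hr hdec (hα i).1 (hk i) hX hTr
  have hend : ∑ i, share p r (α i) (k i) xstar T = 0 := by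
    refine Finset.sum_eq_zero fun i _ => ?_
    have h1 := hTf i
    rw [effRate_eq_numF hp hX.1.le hX.2 hT0 hTr] at h1
    have h2 := neg_of_mul_neg_right h1 (factor_pos hp hX.1.le hX.2 hTr).le
    rw [share, max_eq_right h2.le, mul_zero, zero_div]
  have hstart : xstar ≤ ∑ i, share p r (α i) (k i) xstar 0 := by
    refine hN.trans (Finset.sum_le_sum fun i _ => ?_)
    rcases (hx0.1 i).1.eq_or_lt with hi | hi
    · rw [← hi]; exact share_nonneg hp hr hdec (hα i).1 (hk i) hX le_rfl hrpos
    · exact (hfirst i hi).2.trans (share_anti hp hr hdec (hα i).1 (hk i) h0 hN hN1 le_rfl le_rfl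
        (hr.pos _ ⟨h0.le.trans hN, hN1.le⟩))
  obtain ⟨t, ht, hts⟩ := intermediate_value_Icc' hT0 hcont
    (show xstar ∈ Icc _ _ from ⟨by rw [hend]; exact h0.le, hstart⟩)
  beta_reduce at hts
  have htr := ht.2.trans_lt hTr
  have hpne := isPNE_share hp hr hdec hα hk ht.1 hX htr hts
  refine ⟨t, ⟨ht.1, ?_⟩, _, hpne, hts⟩
  obtain ⟨i, -, hi⟩ := Finset.exists_lt_of_sum_lt (s := Finset.univ) (f := fun _ : ι => (0:ℝ))
    (g := fun i => share p r (α i) (k i) xstar t) (by rw [hts]; simpa using h0)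
  have hf := (hpne.le_share hp hr hdec hα hk ht.1 i hi).1
  rw [hts] at hf
  exact le_tbar hp hdec hα hk hX.1.le ht.1 hf

end Game

/-- for a strictly decreasing rate of return, every utilization
level in `[0, x^0_NE]` is achieved at the PNE for some tax rate in `[0, t̄]`
(in particular the socially optimal utilization `x^0_OPT`), and no utilization
level exceeding `x^0_NE` is achievable by a positive tax rate. -/
theorem statement18 {ι : Type*} [Fintype ι] [DecidableEq ι] [Nonempty ι]
    (p r : ℝ → ℝ) (α k : ι → ℝ)
    (hp : FailureProb p) (hr : RateOfReturn r)
    (hdec : StrictAntiOn r (Icc (0:ℝ) 1))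
    (hα : ∀ i, α i ∈ Ioc (0:ℝ) 1) (hk : ∀ i, 0 < k i)
    (htbar : 0 < tbar p r α k)
    (x0 : ι → ℝ) (hx0 : IsPNE p r α k 0 x0)
    (xOPT : ι → ℝ) (hOPTmem : ∀ i, xOPT i ∈ Icc (0:ℝ) 1)
    (hOPT : ∀ z : ι → ℝ, (∀ i, z i ∈ Icc (0:ℝ) 1) →
      ∑ i, z i ^ α i * effRate p r (α i) (k i) (∑ l, z l) 0 ≤
        ∑ i, xOPT i ^ α i * effRate p r (α i) (k i) (∑ l, xOPT l) 0) :
    (∀ xstar ∈ Icc (0:ℝ) (∑ i, x0 i),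
      ∃ t ∈ Icc (0:ℝ) (tbar p r α k),
        ∃ x : ι → ℝ, IsPNE p r α k t x ∧ ∑ i, x i = xstar) ∧
    (∃ t ∈ Icc (0:ℝ) (tbar p r α k),
      ∃ x : ι → ℝ, IsPNE p r α k t x ∧ ∑ i, x i = ∑ i, xOPT i) ∧
    (∀ xstar : ℝ, ∑ i, x0 i < xstar →
      ¬ ∃ t : ℝ, 0 < t ∧ ∃ x : ι → ℝ, IsPNE p r α k t x ∧ ∑ i, x i = xstar) := by
  refine ⟨fun xstar hxs => exists_tax hp hr hdec hα hk htbar hx0 hxs,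
    exists_tax hp hr hdec hα hk htbar hx0 ⟨Finset.sum_nonneg fun i _ => (hOPTmem i).1,
      opt_total_le hp hr hdec hα hk hx0 hOPTmem hOPT⟩, ?_⟩
  rintro xstar hlt ⟨t, ht, x, hx, rfl⟩
  exact absurd (total_le_of_le_share hp hr hdec hα hk hx0 ht.le (fun i => (hx.1 i).1)
    (hx.le_share hp hr hdec hα hk ht.le)) (not_le.2 hlt)
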